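/- A finite group G has exactly |G| − 5 cyclic subgroups if and only if G is isomorphic to C_7, D_14, or the nontrivial semidirect product C_3 ⋊ C_4 (the dicyclic group of order 12). -/

import Mathlib

/-!
The number `c d` of cyclic subgroups of order `d` satisfies `|G| - #cyc = ∑ d, (φ d - 1) * c d`, so
the condition is that this weighted sum is `5`. For a single element of order `n` it forces
`n - τ n ≤ 5`, hence `n ≤ 8`, and it becomes `c 3 + c 4 + 3 * c 5 + c 6 + 5 * c 7 + 3 * c 8 = 5`.
If `c 7 = 1`, every element outside the subgroup of order `7` is an involution inverting it, which
leaves `C₇` and `D₁₄`. Counting fixed points of conjugation by an element of order `3` or `5`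
shows that `c 5 = 0`, and that `c 3 > 0` forces `c 3 = c 6 = 1` and `c 4 = 3`; then every element
outside the subgroup of order `6` inverts it, and `G` is dicyclic. Otherwise `G` is a `2`-group with
`(c 4, c 8) = (5, 0)` or `(2, 1)`, and neither occurs.
-/

open Subgroup
open scoped Nat

/-- The number of cyclic subgroups of order `d` in a group `G`. As `Nat.card` is `0` on infinite
types, `d = 0` counts the infinite ones, and the value is `0` if there are infinitely many. -/
noncomputable def cyclicCount (G : Type*) [Group G] (d : ℕ) : ℕ :=
  Nat.card {H : Subgroup G // IsCyclic H ∧ Nat.card H = d}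

theorem card_eq_sum_card_fiber {α β : Type*} [Finite α] {f : α → β} {s : Finset β}
    (hs : ∀ a, f a ∈ s) : Nat.card α = ∑ b ∈ s, Nat.card {a // f a = b} := by
  classical
  have := Fintype.ofFinite α
  simp only [Nat.card_eq_fintype_card, Fintype.card_subtype]
  exact Finset.card_eq_sum_card_fiberwise fun a _ ↦ hs a

section Counting

variable {G : Type*} [Group G] [Finite G]

theorem card_zpowers_eq (H : Subgroup G) [IsCyclic H] :
    Nat.card {g : G // zpowers g = H} = φ (Nat.card H) := by
  classical
  have := Fintype.ofFinite H
  have hmem {g : G} (hg : zpowers g = H) : g ∈ H := hg ▸ mem_zpowers g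
  have hgen (h : H) : orderOf h = Nat.card H ↔ zpowers (h : G) = H := by
    rw [← Subgroup.orderOf_coe, ← Nat.card_zpowers]
    exact ⟨eq_of_le_of_card_ge (zpowers_le.2 h.2) ∘ Eq.ge, fun e ↦ by rw [e]⟩
  calc Nat.card {g : G // zpowers g = H}
    _ = Nat.card {h : H // orderOf h = Nat.card H} :=
      Nat.card_congr
        { toFun g := ⟨⟨g.1, hmem g.2⟩, (hgen _).2 g.2⟩
          invFun h := ⟨h.1, (hgen _).1 h.2⟩ }
    _ = φ (Nat.card H) := by
      rw [Nat.card_eq_fintype_card (α := H), ← IsCyclic.card_orderOf_eq_totient dvd_rfl,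
        ← Fintype.card_subtype, Nat.card_eq_fintype_card]

theorem card_orderOf_eq (d : ℕ) :
    Nat.card {g : G // orderOf g = d} = φ d * cyclicCount G d := by
  have := Fintype.ofFinite {H : Subgroup G // IsCyclic H ∧ Nat.card H = d}
  have e : {g : G // orderOf g = d} ≃
      Σ H : {H : Subgroup G // IsCyclic H ∧ Nat.card H = d}, {g : G // zpowers g = H} :=
    { toFun g := ⟨⟨zpowers g.1, inferInstance, by rw [Nat.card_zpowers, g.2]⟩, g.1, rfl⟩
      invFun p := ⟨p.2.1, by rw [← Nat.card_zpowers, p.2.2, p.1.2.2]⟩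
      right_inv := by
        rintro ⟨⟨H, hH⟩, g, rfl : zpowers g = H⟩
        rfl }
  have hfiber (H : {H : Subgroup G // IsCyclic H ∧ Nat.card H = d}) :
      Nat.card {g : G // zpowers g = H} = φ d := by
    have := H.2.1
    rw [card_zpowers_eq, H.2.2]
  rw [Nat.card_congr e, Nat.card_sigma, Finset.sum_congr rfl fun H _ ↦ hfiber H,
    Finset.sum_const, smul_eq_mul, mul_comm, Finset.card_univ, ← Nat.card_eq_fintype_card,
    cyclicCount]

theorem cyclicCount_pos_iff {d : ℕ} : 0 < cyclicCount G d ↔ ∃ g : G, orderOf g = d := by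
  constructor
  · intro h
    obtain ⟨⟨H, ⟨hH, hd⟩⟩⟩ := (Nat.card_pos_iff.1 h).1
    obtain ⟨g, rfl⟩ := H.isCyclic_iff_exists_zpowers_eq_top.1 hH
    exact ⟨g, by rw [← Nat.card_zpowers, hd]⟩
  · rintro ⟨g, rfl⟩
    exact Nat.card_pos_iff.2 ⟨⟨⟨zpowers g, inferInstance, Nat.card_zpowers g⟩⟩, inferInstance⟩

theorem cyclicCount_zero : cyclicCount G 0 = 0 :=
  Nat.eq_zero_of_not_pos fun h ↦
    let ⟨g, hg⟩ := cyclicCount_pos_iff.1 h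
    (orderOf_pos g).ne' hg

theorem dvd_card_of_cyclicCount_pos {d : ℕ} (hd : 0 < cyclicCount G d) : d ∣ Nat.card G :=
  let ⟨g, hg⟩ := cyclicCount_pos_iff.1 hd
  hg ▸ orderOf_dvd_natCard g

theorem cyclicCount_pos_of_dvd {d n : ℕ} (hdn : d ∣ n) (hn : 0 < cyclicCount G n) :
    0 < cyclicCount G d := by
  obtain ⟨x, rfl⟩ := cyclicCount_pos_iff.1 hn
  exact cyclicCount_pos_iff.2 ⟨_, orderOf_pow_orderOf_div (orderOf_pos x).ne' hdn⟩

theorem card_isCyclic_eq_sum {s : Finset ℕ} (hs : ∀ g : G, orderOf g ∈ s) :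
    Nat.card {H : Subgroup G // IsCyclic H} = ∑ d ∈ s, cyclicCount G d := by
  have hmem (H : {H : Subgroup G // IsCyclic H}) : Nat.card H.1 ∈ s := by
    obtain ⟨g, hg⟩ := H.1.isCyclic_iff_exists_zpowers_eq_top.1 H.2
    rw [← hg, Nat.card_zpowers]
    exact hs g
  rw [card_eq_sum_card_fiber hmem]
  exact Finset.sum_congr rfl fun d _ ↦
    Nat.card_congr (Equiv.subtypeSubtypeEquivSubtypeInter (fun H : Subgroup G ↦ IsCyclic H)
      fun H ↦ Nat.card H = d)

theorem sum_totient_sub_one_mul_cyclicCount {s : Finset ℕ} (hs : ∀ g : G, orderOf g ∈ s) :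
    ∑ d ∈ s, (φ d - 1) * cyclicCount G d + Nat.card {H : Subgroup G // IsCyclic H} =
      Nat.card G := by
  rw [card_eq_sum_card_fiber hs, card_isCyclic_eq_sum hs, ← Finset.sum_add_distrib]
  refine Finset.sum_congr rfl fun d _ ↦ ?_
  rw [card_orderOf_eq]
  obtain rfl | hd := d.eq_zero_or_pos
  · simp [cyclicCount_zero]
  · obtain ⟨k, hk⟩ := Nat.exists_eq_add_one.2 (Nat.totient_pos.2 hd)
    rw [hk, Nat.add_sub_cancel, add_one_mul]

theorem sum_inv_totient_orderOf [Fintype G] :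
    ∑ g : G, (φ (orderOf g) : ℚ)⁻¹ = Nat.card {H : Subgroup G // IsCyclic H} := by
  classical
  have hs (g : G) : orderOf g ∈ Finset.univ.image (orderOf (G := G)) :=
    Finset.mem_image_of_mem _ (Finset.mem_univ g)
  rw [card_isCyclic_eq_sum hs, Nat.cast_sum,
    ← Finset.sum_fiberwise_of_maps_to fun g _ ↦ hs g]
  refine Finset.sum_congr rfl fun d hd ↦ ?_
  obtain ⟨g, -, rfl⟩ := Finset.mem_image.1 hd
  have hφ : (φ (orderOf g) : ℚ) ≠ 0 := by exact_mod_cast (Nat.totient_pos.2 (orderOf_pos g)).ne'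
  rw [Finset.sum_congr rfl fun h hh ↦ by rw [(Finset.mem_filter.1 hh).2], Finset.sum_const,
    ← Fintype.card_subtype, ← Nat.card_eq_fintype_card, card_orderOf_eq, nsmul_eq_mul,
    Nat.cast_mul]
  field_simp

theorem orderOf_add_card_isCyclic_le (g : G) :
    orderOf g + Nat.card {H : Subgroup G // IsCyclic H} ≤
      Nat.card G + (orderOf g).divisors.card := by
  classical
  have := Fintype.ofFinite G
  set s : Finset ℕ := Finset.univ.image (orderOf (G := G))
  have hs (g : G) : orderOf g ∈ s := Finset.mem_image_of_mem _ (Finset.mem_univ g)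
  have hsub : (orderOf g).divisors ⊆ s := fun e he ↦
    orderOf_pow_orderOf_div (orderOf_pos g).ne' (Nat.dvd_of_mem_divisors he) ▸ hs _
  have hdivisors : ∑ e ∈ (orderOf g).divisors, (φ e - 1) + (orderOf g).divisors.card =
      orderOf g := by
    rw [Finset.card_eq_sum_ones, ← Finset.sum_add_distrib]
    refine .trans (Finset.sum_congr rfl fun e he ↦ ?_) (Nat.sum_totient _)
    exact Nat.sub_add_cancel (Nat.totient_pos.2 (Nat.pos_of_mem_divisors he))
  have hle : ∑ e ∈ (orderOf g).divisors, (φ e - 1) ≤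
      ∑ e ∈ s, (φ e - 1) * cyclicCount G e := by
    refine (Finset.sum_le_sum fun e he ↦ Nat.le_mul_of_pos_right _ ?_).trans
      (Finset.sum_le_sum_of_subset hsub)
    exact cyclicCount_pos_iff.2 (by simpa [s] using hsub he)
  have := sum_totient_sub_one_mul_cyclicCount hs
  omega

theorem cyclicCount_of_isCyclic [IsCyclic G] {d : ℕ} (hd : d ∣ Nat.card G) :
    cyclicCount G d = 1 := by
  classical
  have := Fintype.ofFinite G
  have hpos : 0 < φ d := Nat.totient_pos.2 (Nat.pos_of_dvd_of_pos hd Nat.card_pos)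
  refine Nat.eq_of_mul_eq_mul_left hpos ?_
  rw [← card_orderOf_eq, mul_one, Nat.card_eq_fintype_card, Fintype.card_subtype]
  exact IsCyclic.card_orderOf_eq_totient (Nat.card_eq_fintype_card (α := G) ▸ hd)

theorem card_isCyclic_of_isCyclic [IsCyclic G] :
    Nat.card {H : Subgroup G // IsCyclic H} = (Nat.card G).divisors.card := by
  have hs (g : G) : orderOf g ∈ (Nat.card G).divisors :=
    Nat.mem_divisors.2 ⟨orderOf_dvd_natCard g, Nat.card_pos.ne'⟩
  rw [card_isCyclic_eq_sum hs, Finset.card_eq_sum_ones]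
  exact Finset.sum_congr rfl fun d hd ↦ cyclicCount_of_isCyclic (Nat.dvd_of_mem_divisors hd)

theorem card_isCyclic_mul_totient_of_index_eq_two (H : Subgroup G) [IsCyclic H]
    (hindex : H.index = 2) {q : ℕ} (hq : ∀ g ∉ H, orderOf g = q) :
    Nat.card {K : Subgroup G // IsCyclic K} * φ q =
      (Nat.card H).divisors.card * φ q + Nat.card H := by
  classical
  have := Fintype.ofFinite G
  have hφ : (φ q : ℚ) ≠ 0 := by
    obtain ⟨g, hg⟩ : ∃ g, g ∉ H := by
      by_contra! h
      simp [(eq_top_iff' H).2 h] at hindex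
    exact_mod_cast (Nat.totient_pos.2 (hq g hg ▸ orderOf_pos g)).ne'
  have hcompl : Fintype.card {g // g ∉ H} = Nat.card H := by
    rw [Fintype.card_subtype_compl, ← Nat.card_eq_fintype_card, ← Nat.card_eq_fintype_card,
      ← H.card_mul_index, hindex]
    exact Nat.sub_eq_of_eq_add (mul_two _)
  have hin : ∑ g : H, (φ (orderOf (g : G)) : ℚ)⁻¹ = (Nat.card H).divisors.card := by
    simp only [Subgroup.orderOf_coe]
    rw [sum_inv_totient_orderOf, card_isCyclic_of_isCyclic]
  have hout : ∑ g : {g // g ∉ H}, (φ (orderOf (g : G)) : ℚ)⁻¹ = Nat.card H * (φ q : ℚ)⁻¹ := by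
    rw [Finset.sum_congr rfl fun g _ ↦ by rw [hq g g.2], Finset.sum_const, Finset.card_univ,
      hcompl, nsmul_eq_mul]
  have hsum := sum_inv_totient_orderOf (G := G)
  rw [← Fintype.sum_subtype_add_sum_subtype (· ∈ H), hin, hout] at hsum
  rw [← Nat.cast_inj (R := ℚ)]
  push_cast
  rw [← hsum]
  field_simp

end Counting

theorem card_isCyclic_congr {G H : Type*} [Group G] [Group H] (e : G ≃* H) :
    Nat.card {K : Subgroup G // IsCyclic K} = Nat.card {K : Subgroup H // IsCyclic K} :=
  Nat.card_congr <| e.mapSubgroup.toEquiv.subtypeEquiv fun K ↦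
    (e.subgroupMap K).isCyclic

theorem le_eight_of_le_card_divisors_add_five {n : ℕ} (h : n ≤ n.divisors.card + 5) : n ≤ 8 := by
  have hsub : n.divisors ⊆ insert n (Finset.Icc 1 (n / 2)) := fun e he ↦ by
    obtain ⟨⟨k, rfl⟩, h0⟩ := Nat.mem_divisors.1 he
    obtain rfl | hk : k = 1 ∨ 2 ≤ k := by
      have : k ≠ 0 := right_ne_zero_of_mul h0
      omega
    · simp
    · have := Nat.mul_le_mul_left e hk
      simp only [Finset.mem_insert, Finset.mem_Icc]
      have := Nat.pos_of_mem_divisors he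
      omega
  have hcard := (Finset.card_le_card hsub).trans (Finset.card_insert_le _ _)
  rw [Nat.card_Icc] at hcard
  have : n ≤ 12 := by omega
  interval_cases n <;> first | omega | exact absurd h (by decide)

theorem orderOf_eq_two_of_notMem_zpowers_r_one {n : ℕ} [NeZero n] :
    ∀ g ∉ zpowers (DihedralGroup.r 1 : DihedralGroup n), orderOf g = 2 := by
  rintro (i | i) hi
  · refine absurd (mem_zpowers_iff.2 ⟨i.val, ?_⟩) hi
    rw [zpow_natCast, DihedralGroup.r_one_pow, ZMod.natCast_zmod_val]
  · exact DihedralGroup.orderOf_sr i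

theorem mem_zpowers_a_one_iff {n : ℕ} [NeZero n] {g : QuaternionGroup n} :
    g ∈ zpowers (QuaternionGroup.a 1) ↔ ∃ i, g = QuaternionGroup.a i := by
  constructor
  · rw [← mem_powers_iff_mem_zpowers]
    rintro ⟨k, rfl⟩
    exact ⟨k, QuaternionGroup.a_one_pow k⟩
  · rintro ⟨i, rfl⟩
    refine mem_zpowers_iff.2 ⟨i.val, ?_⟩
    rw [zpow_natCast, QuaternionGroup.a_one_pow, ZMod.natCast_zmod_val]

theorem orderOf_eq_four_of_notMem_zpowers_a_one {n : ℕ} [NeZero n] :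
    ∀ g ∉ zpowers (QuaternionGroup.a 1 : QuaternionGroup n), orderOf g = 4 := by
  rintro (i | i) hi
  · exact absurd (mem_zpowers_a_one_iff.2 ⟨i, rfl⟩) hi
  · exact QuaternionGroup.orderOf_xa i

theorem card_zpowers_r_one (n : ℕ) :
    Nat.card (zpowers (DihedralGroup.r 1 : DihedralGroup n)) = n := by
  rw [Nat.card_zpowers, DihedralGroup.orderOf_r_one]

theorem card_zpowers_a_one (n : ℕ) :
    Nat.card (zpowers (QuaternionGroup.a 1 : QuaternionGroup n)) = 2 * n := by
  rw [Nat.card_zpowers, QuaternionGroup.orderOf_a_one]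

theorem index_zpowers_r_one (n : ℕ) [NeZero n] :
    (zpowers (DihedralGroup.r 1 : DihedralGroup n)).index = 2 := by
  have := card_mul_index (zpowers (DihedralGroup.r 1 : DihedralGroup n))
  rw [card_zpowers_r_one, DihedralGroup.nat_card, mul_comm] at this
  exact Nat.eq_of_mul_eq_mul_right (NeZero.pos n) this

theorem index_zpowers_a_one (n : ℕ) [NeZero n] :
    (zpowers (QuaternionGroup.a 1 : QuaternionGroup n)).index = 2 := by
  have := card_mul_index (zpowers (QuaternionGroup.a 1 : QuaternionGroup n))
  rw [card_zpowers_a_one, Nat.card_eq_fintype_card (α := QuaternionGroup n),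
    QuaternionGroup.card] at this
  have := NeZero.pos n
  nlinarith

theorem card_isCyclic_dihedralGroup (n : ℕ) [NeZero n] :
    Nat.card {K : Subgroup (DihedralGroup n) // IsCyclic K} = n.divisors.card + n := by
  simpa only [card_zpowers_r_one, Nat.totient_two, mul_one] using
    card_isCyclic_mul_totient_of_index_eq_two _ (index_zpowers_r_one n)
      orderOf_eq_two_of_notMem_zpowers_r_one

theorem card_isCyclic_quaternionGroup (n : ℕ) [NeZero n] :
    Nat.card {K : Subgroup (QuaternionGroup n) // IsCyclic K} = (2 * n).divisors.card + n := by
  have := card_isCyclic_mul_totient_of_index_eq_two _ (index_zpowers_a_one n)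
    orderOf_eq_four_of_notMem_zpowers_a_one
  rw [card_zpowers_a_one, show φ 4 = 2 by decide] at this
  omega

section Congruences

variable {G : Type*} [Group G]

theorem card_dvd_card_of_mul_mem (H : Subgroup G) {A : Set G}
    (hA : ∀ a ∈ A, ∀ h ∈ H, a * h ∈ A) : Nat.card H ∣ Nat.card A := by
  have hpre : ((↑) : G → G ⧸ H) ⁻¹' ((↑) '' A) = A := by
    refine (Set.subset_preimage_image _ A).antisymm' ?_
    rintro g ⟨a, ha, hag⟩
    simpa using hA a ha _ (QuotientGroup.eq.1 hag)
  rw [← hpre, Nat.card_congr (QuotientGroup.preimageMkEquivSubgroupProdSet H _), Nat.card_prod]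
  exact dvd_mul_right _ _

theorem orderOf_conj (x g : G) : orderOf (x * g * x⁻¹) = orderOf g :=
  (SemiconjBy.conj_mk x g).orderOf_eq.symm

variable [Finite G] {p : ℕ} [Fact p.Prime]

theorem card_modEq_card_commute {x : G} (hx : x ^ p = 1) {A : Set G}
    (hA : ∀ a ∈ A, x * a * x⁻¹ ∈ A) :
    Nat.card A ≡ Nat.card {a | a ∈ A ∧ Commute x a} [MOD p] := by
  classical
  have := Fintype.ofFinite A
  have hmaps : Set.MapsTo (MulAut.conj x) A A := hA
  let f : Function.End A := hmaps.restrict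
  have hpow : f ^ p ^ 1 = 1 := by
    funext a
    refine Subtype.ext ((hmaps.coe_iterate_restrict a (p ^ 1)).trans ?_)
    calc (MulAut.conj x)^[p ^ 1] a
      _ = (MulAut.conj x ^ p ^ 1) • (a : G) := congrFun (smul_iterate (MulAut.conj x) _) _
      _ = a := by rw [pow_one, ← map_pow, hx, map_one, one_smul]
  have hmod := Equiv.Perm.card_fixedPoints_modEq hpow
  rw [← Nat.card_eq_fintype_card, ← Nat.card_eq_fintype_card] at hmod
  have e : Function.fixedPoints f ≃ {a | a ∈ A ∧ Commute x a} :=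
    { toFun a := ⟨a, a.1.2, mul_inv_eq_iff_eq_mul.1 (congrArg Subtype.val a.2)⟩
      invFun a := ⟨⟨a, a.2.1⟩, Subtype.ext (mul_inv_eq_iff_eq_mul.2 a.2.2)⟩ }
  rwa [Nat.card_congr e] at hmod

theorem dvd_card_pow_eq_one (hp : p ∣ Nat.card G) : p ∣ Nat.card {g : G | g ^ p = 1} := by
  obtain ⟨x, hx⟩ := exists_prime_orderOf_dvd_card' p hp
  have hxp : x ^ p = 1 := hx ▸ pow_orderOf_eq_one x
  have hmod := card_modEq_card_commute hxp (A := {g : G | g ^ p = 1}) fun g hg ↦ by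
    rw [Set.mem_ofPred_eq] at hg ⊢
    rw [conj_pow, hg, mul_one, mul_inv_cancel]
  rw [hmod.dvd_iff dvd_rfl]
  nth_rw 1 [← hx, ← Nat.card_zpowers]
  refine card_dvd_card_of_mul_mem (zpowers x) ?_
  rintro a ⟨ha, hxa⟩ _ ⟨k, rfl⟩
  have hxk : Commute x (x ^ k) := Commute.self_zpow x k
  refine ⟨?_, hxa.mul_right hxk⟩
  rw [Set.mem_ofPred_eq, (hxa.zpow_left k).symm.mul_pow, ha, one_mul, ← zpow_natCast, zpow_comm,
    zpow_natCast, hxp, one_zpow]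

theorem cyclicCount_modEq_one (hp : p ∣ Nat.card G) : cyclicCount G p ≡ 1 [MOD p] := by
  have hpp : p.Prime := Fact.out
  have hinsert : {g : G | g ^ p = 1} = insert 1 {g | orderOf g = p} := by
    ext g
    rw [Set.mem_insert_iff, Set.mem_ofPred_eq, Set.mem_ofPred_eq, orderOf_eq_prime_iff]
    by_cases hg : g = 1 <;> simp [hg]
  have hdvd := dvd_card_pow_eq_one hp
  have hN : Nat.card {g : G | orderOf g = p} = (p - 1) * cyclicCount G p := by
    rw [← Nat.totient_prime hpp]
    exact card_orderOf_eq p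
  rw [hinsert, Nat.card_coe_set_eq, Set.ncard_insert_of_notMem (by simpa using hpp.ne_one.symm),
    ← Nat.card_coe_set_eq, hN] at hdvd
  obtain ⟨q, rfl⟩ := Nat.exists_eq_add_of_le' hpp.one_le
  rw [Nat.add_sub_cancel] at hdvd
  refine Nat.ModEq.add_left_cancel' (q * cyclicCount G (q + 1)) ?_
  rw [← add_one_mul]
  exact (Nat.modEq_zero_iff_dvd.2 (dvd_mul_right _ _)).trans (Nat.modEq_zero_iff_dvd.2 hdvd).symm

theorem dvd_card_orderOf_of_cyclicCount_mul_eq_zero {n : ℕ} (hp : p ∣ Nat.card G)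
    (hpn : p.Coprime n) (h0 : cyclicCount G (p * n) = 0) : p ∣ φ n * cyclicCount G n := by
  obtain ⟨x, hx⟩ := exists_prime_orderOf_dvd_card' p hp
  have hmod := card_modEq_card_commute (hx ▸ pow_orderOf_eq_one x) (A := {g : G | orderOf g = n})
    fun g hg ↦ (orderOf_conj x g).trans hg
  have hempty : {g | g ∈ {g : G | orderOf g = n} ∧ Commute x g} = ∅ := by
    refine Set.eq_empty_of_forall_notMem fun g ⟨hg, hxg⟩ ↦ ?_
    rw [Set.mem_ofPred_eq] at hg
    have hxgn : orderOf (x * g) = p * n := by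
      rw [hxg.orderOf_mul_eq_mul_orderOf_of_coprime (by rwa [hx, hg]), hx, hg]
    exact (cyclicCount_pos_iff.2 ⟨_, hxgn⟩).ne' h0
  rw [hempty, Nat.card_of_isEmpty (α := (∅ : Set G))] at hmod
  rw [← card_orderOf_eq]
  exact Nat.modEq_zero_iff_dvd.1 hmod

theorem mul_card_dvd_card_pow_mem (Y : Subgroup G) [Y.Normal] (hp : p ∣ Y.index) :
    p * Nat.card Y ∣ Nat.card {g : G | g ^ p ∈ Y} := by
  have hpre : {g : G | g ^ p ∈ Y} = ((↑) : G → G ⧸ Y) ⁻¹' {q | q ^ p = 1} := by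
    ext g
    rw [Set.mem_ofPred_eq, ← QuotientGroup.eq_one_iff]
    rfl
  rw [hpre, Nat.card_congr (QuotientGroup.preimageMkEquivSubgroupProdSet Y _), Nat.card_prod,
    mul_comm]
  exact mul_dvd_mul_left _ (dvd_card_pow_eq_one (by rwa [← index_eq_card]))

end Congruences

section CoprimeOrders

variable {G : Type*} [Group G] {a b : ℕ}

theorem card_orderOf_eq_mul (hab : a.Coprime b) (ha : 0 < a) (hb : 0 < b) :
    Nat.card {g : G // orderOf g = a * b} =
      Nat.card {p : G × G // orderOf p.1 = a ∧ orderOf p.2 = b ∧ Commute p.1 p.2} := by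
  obtain ⟨u, hua, hub⟩ := Nat.chineseRemainder hab 1 0
  obtain ⟨v, hva, hvb⟩ := Nat.chineseRemainder hab 0 1
  have huv : u + v ≡ 1 [MOD a * b] :=
    (Nat.modEq_and_modEq_iff_modEq_mul hab).1 ⟨hua.add hva, hub.add hvb⟩
  have hone {g : G} {k l : ℕ} (hg : orderOf g = k) (h : l ≡ 1 [MOD k]) : g ^ l = g := by
    conv_rhs => rw [← pow_one g]
    exact pow_eq_pow_iff_modEq.2 (hg ▸ h)
  have hzero {g : G} {k l : ℕ} (hg : orderOf g = k) (h : l ≡ 0 [MOD k]) : g ^ l = 1 :=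
    orderOf_dvd_iff_pow_eq_one.1 (hg ▸ Nat.modEq_zero_iff_dvd.1 h)
  have horder_u {g : G} (hg : orderOf g = a * b) : orderOf (g ^ u) = a := by
    have hfin : IsOfFinOrder g := orderOf_pos_iff.1 (hg ▸ Nat.mul_pos ha hb)
    rw [hfin.orderOf_pow, hg, Nat.gcd_comm, hab.gcd_mul, hua.gcd_eq,
      Nat.gcd_eq_right (Nat.modEq_zero_iff_dvd.1 hub), Nat.gcd_one_left, one_mul,
      Nat.mul_div_cancel _ hb]
  have horder_v {g : G} (hg : orderOf g = a * b) : orderOf (g ^ v) = b := by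
    have hfin : IsOfFinOrder g := orderOf_pos_iff.1 (hg ▸ Nat.mul_pos ha hb)
    rw [hfin.orderOf_pow, hg, Nat.gcd_comm, hab.gcd_mul, hvb.gcd_eq,
      Nat.gcd_eq_right (Nat.modEq_zero_iff_dvd.1 hva), Nat.gcd_one_left, mul_one,
      Nat.mul_div_cancel_left _ ha]
  refine Nat.card_congr
    { toFun g := ⟨(g ^ u, g ^ v), horder_u g.2, horder_v g.2, Commute.pow_pow_self g.1 u v⟩
      invFun := fun ⟨(s, z), hs, hz, hsz⟩ ↦ ⟨s * z, by
        subst hs hz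
        exact hsz.orderOf_mul_eq_mul_orderOf_of_coprime hab⟩
      left_inv g := Subtype.ext ((pow_add _ _ _).symm.trans (hone g.2 huv))
      right_inv := ?_ }
  rintro ⟨⟨s, z⟩, hs, hz, hsz⟩
  refine Subtype.ext (Prod.ext ?_ ?_)
  · exact (hsz.mul_pow u).trans (by rw [hone hs hua, hzero hz hub, mul_one])
  · exact (hsz.mul_pow v).trans (by rw [hone hz hvb, hzero hs hva, one_mul])

theorem zpowers_eq_zpowers_of_cyclicCount_eq_one {d : ℕ} (h : cyclicCount G d = 1) {x y : G}
    (hx : orderOf x = d) (hy : orderOf y = d) : zpowers x = zpowers y := by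
  have := (Nat.card_eq_one_iff_unique.1 h).1
  exact congrArg Subtype.val (Subsingleton.elim
    (⟨zpowers x, inferInstance, (Nat.card_zpowers x).trans hx⟩ :
      {H : Subgroup G // IsCyclic H ∧ Nat.card H = d})
    ⟨zpowers y, inferInstance, (Nat.card_zpowers y).trans hy⟩)

variable [Finite G]

theorem cyclicCount_mul_eq_cyclicCount_centralizer (hab : a.Coprime b) {x : G}
    (hx : orderOf x = b) (h1 : cyclicCount G b = 1) :
    cyclicCount G (a * b) = cyclicCount (centralizer {x}) a := by
  have hb : 0 < b := hx ▸ orderOf_pos x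
  obtain rfl | ha := a.eq_zero_or_pos
  · rw [zero_mul, cyclicCount_zero, cyclicCount_zero]
  have hcomm {s z : G} (hz : orderOf z = b) : Commute s z ↔ s ∈ centralizer {x} := by
    rw [mem_centralizer_singleton_iff]
    have hzx := zpowers_eq_zpowers_of_cyclicCount_eq_one h1 hx hz
    constructor
    · obtain ⟨k, hk⟩ : x ∈ zpowers z := hzx ▸ mem_zpowers x
      exact fun h ↦ hk ▸ h.zpow_right k
    · obtain ⟨k, hk⟩ : z ∈ zpowers x := hzx ▸ mem_zpowers z
      exact fun h ↦ hk ▸ Commute.zpow_right h k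
  have e : {p : G × G // orderOf p.1 = a ∧ orderOf p.2 = b ∧ Commute p.1 p.2} ≃
      {s : centralizer {x} // orderOf s = a} × {z : G // orderOf z = b} :=
    { toFun p := (⟨⟨p.1.1, (hcomm p.2.2.1).1 p.2.2.2⟩, (Subgroup.orderOf_mk ..).trans p.2.1⟩,
        ⟨p.1.2, p.2.2.1⟩)
      invFun q := ⟨(q.1.1, q.2), (Subgroup.orderOf_coe _).trans q.1.2, q.2.2,
        (hcomm q.2.2).2 q.1.1.2⟩ }
  have hcard := (card_orderOf_eq_mul (G := G) hab ha hb).trans (Nat.card_congr e)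
  rw [Nat.card_prod, card_orderOf_eq, card_orderOf_eq, card_orderOf_eq, h1, mul_one,
    Nat.totient_mul hab, mul_right_comm] at hcard
  exact Nat.eq_of_mul_eq_mul_right (Nat.totient_pos.2 hb)
    (Nat.eq_of_mul_eq_mul_left (Nat.totient_pos.2 ha) (by linarith))

theorem cyclicCount_prime_mul_modEq_one {p : ℕ} [Fact p.Prime] (hpb : p.Coprime b)
    (h1 : cyclicCount G b = 1) (hpos : 0 < cyclicCount G (p * b)) :
    cyclicCount G (p * b) ≡ 1 [MOD p] := by
  obtain ⟨x, hx⟩ := cyclicCount_pos_iff.1 (h1 ▸ one_pos)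
  rw [cyclicCount_mul_eq_cyclicCount_centralizer hpb hx h1] at hpos ⊢
  obtain ⟨y, hy⟩ := cyclicCount_pos_iff.1 hpos
  exact cyclicCount_modEq_one (hy ▸ orderOf_dvd_natCard y)

theorem totient_mul_cyclicCount_le_of_mem_center {z : G} (hz : z ∈ center G) {n : ℕ}
    (hn : (orderOf z).Coprime n) :
    φ n * cyclicCount G n ≤ φ (orderOf z * n) * cyclicCount G (orderOf z * n) := by
  rw [← card_orderOf_eq, ← card_orderOf_eq]
  have hmap {g : G} (hg : orderOf g = n) : orderOf (z * g) = orderOf z * n := by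
    have hzg : Commute z g := (mem_center_iff.1 hz g).symm
    rw [hzg.orderOf_mul_eq_mul_orderOf_of_coprime (hg ▸ hn), hg]
  let f (g : {g : G // orderOf g = n}) : {g : G // orderOf g = orderOf z * n} :=
    ⟨z * g, hmap g.2⟩
  exact Nat.card_le_card_of_injective f fun g h hgh ↦
    Subtype.ext (mul_left_cancel (congrArg Subtype.val hgh))

end CoprimeOrders

section Recognition

variable {G : Type*} [Group G] {H : Subgroup G}

theorem conj_eq_inv_of_forall_notMem_sq_eq_one (hH : ∀ g ∉ H, g ^ 2 = 1) {g h : G} (hg : g ∉ H)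
    (hh : h ∈ H) : g * h * g⁻¹ = h⁻¹ := by
  have hgh : (g * h) ^ 2 = 1 := hH _ fun hmem ↦ hg ((H.mul_mem_cancel_right hh).1 hmem)
  have hinv : g⁻¹ = g := inv_eq_of_mul_eq_one_right ((sq g).symm.trans (hH g hg))
  rw [sq] at hgh
  rw [hinv]
  exact eq_inv_of_mul_eq_one_left (by rwa [mul_assoc (g * h)])

theorem index_eq_two_of_forall_notMem_conj_eq_inv (htop : H ≠ ⊤)
    (hinv : ∀ g ∉ H, ∀ h ∈ H, g * h * g⁻¹ = h⁻¹) {u : G} (hu : u ∈ H) (hu2 : u ^ 2 ≠ 1) :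
    H.index = 2 := by
  obtain ⟨y, hy⟩ : ∃ y, y ∉ H := by
    by_contra! h
    exact htop ((eq_top_iff' H).2 h)
  refine index_eq_two_iff.2 ⟨y, fun g ↦ ?_⟩
  by_cases hg : g ∈ H
  · exact .inr ⟨hg, fun h ↦ hy ((H.mul_mem_cancel_left hg).1 h)⟩
  · refine .inl ⟨by_contra fun hgy ↦ hu2 ?_, hg⟩
    have hcomm : g * y * u * (g * y)⁻¹ = u :=
      calc g * y * u * (g * y)⁻¹
        _ = g * (y * u * y⁻¹) * g⁻¹ := by group
        _ = u := by rw [hinv y hy u hu, hinv g hg _ (H.inv_mem hu), inv_inv]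
    rw [sq, mul_eq_one_iff_eq_inv, ← hinv _ hgy u hu, hcomm]

theorem bijective_sumElim_mul_of_index_eq_two (hindex : H.index = 2) {y : G} (hy : y ∉ H) :
    Function.Bijective (Sum.elim (fun h : H ↦ (h : G)) fun h : H ↦ y * h) := by
  refine ⟨Subtype.val_injective.sumElim ((mul_right_injective y).comp Subtype.val_injective) ?_, ?_⟩
  · intro h k hhk
    exact hy ((H.mul_mem_cancel_right k.2).1 (hhk ▸ h.2))
  · intro g
    by_cases hg : g ∈ H
    · exact ⟨.inl ⟨g, hg⟩, rfl⟩
    · have hyg : y⁻¹ * g ∈ H := by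
        rw [mul_mem_iff_of_index_two hindex, inv_mem_iff]
        exact iff_of_false hy hg
      exact ⟨.inr ⟨_, hyg⟩, mul_inv_cancel_left y g⟩

theorem mul_eq_mul_inv_of_conj_eq_inv {g h : G} (hgh : g * h * g⁻¹ = h⁻¹) : h * g = g * h⁻¹ := by
  rw [eq_mul_inv_iff_mul_eq, mul_assoc, mul_inv_eq_iff_eq_mul.1 hgh, mul_inv_cancel_left]

theorem mul_mul_mul_eq_of_conj_eq_inv {g h : G} (hgh : g * h * g⁻¹ = h⁻¹) (k : G) :
    g * h * (g * k) = g ^ 2 * (h⁻¹ * k) := by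
  rw [mul_assoc, ← mul_assoc h, mul_eq_mul_inv_of_conj_eq_inv hgh, mul_assoc, ← mul_assoc g, ← sq]

variable {G' : Type*} [Group G'] {K : Subgroup G'} {x : G} {y : G'}

theorem nonempty_mulEquiv_of_index_eq_two_of_conj_eq_inv (e : H ≃* K) (hH : H.index = 2)
    (hK : K.index = 2) (hx : x ∉ H) (hy : y ∉ K) (hxH : ∀ h ∈ H, x * h * x⁻¹ = h⁻¹)
    (hyK : ∀ k ∈ K, y * k * y⁻¹ = k⁻¹)
    (hxy : e ⟨x ^ 2, sq_mem_of_index_two hH x⟩ = ⟨y ^ 2, sq_mem_of_index_two hK y⟩) :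
    Nonempty (G ≃* G') := by
  let A := Equiv.ofBijective _ (bijective_sumElim_mul_of_index_eq_two hH hx)
  let B := Equiv.ofBijective _ (bijective_sumElim_mul_of_index_eq_two hK hy)
  let F : G ≃ G' := A.symm.trans ((Equiv.sumCongr e.toEquiv e.toEquiv).trans B)
  have hF (h : H) : F h = e h :=
    congrArg (B ∘ Sum.map e e) (A.symm_apply_apply (.inl h))
  have hFx (h : H) : F (x * h) = y * e h :=
    congrArg (B ∘ Sum.map e e) (A.symm_apply_apply (.inr h))
  refine ⟨MulEquiv.mk F fun a b ↦ ?_⟩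
  obtain ⟨h | h, rfl⟩ := A.surjective a <;> obtain ⟨k | k, rfl⟩ := A.surjective b
  · calc F (h * k)
      _ = e (h * k) := hF (h * k)
      _ = F h * F k := by rw [hF, hF, map_mul, coe_mul]
  · calc F (h * (x * k))
      _ = F (x * (h⁻¹ * k : H)) := by
        rw [← mul_assoc, mul_eq_mul_inv_of_conj_eq_inv (hxH h h.2), mul_assoc, coe_mul, coe_inv]
      _ = F h * F (x * k) := by
        rw [hFx, hFx, hF, ← mul_assoc, mul_eq_mul_inv_of_conj_eq_inv (hyK _ (e h).2), mul_assoc,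
          map_mul, map_inv, coe_mul, coe_inv]
  · calc F (x * h * k)
      _ = F (x * (h * k : H)) := by rw [mul_assoc, coe_mul]
      _ = F (x * h) * F k := by rw [hFx, hFx, hF, map_mul, coe_mul, mul_assoc]
  · calc F (x * h * (x * k))
      _ = F (⟨x ^ 2, sq_mem_of_index_two hH x⟩ * (h⁻¹ * k) : H) := by
        rw [mul_mul_mul_eq_of_conj_eq_inv (hxH h h.2)]
        rfl
      _ = F (x * h) * F (x * k) := by
        rw [hFx, hFx, hF, map_mul, hxy, mul_mul_mul_eq_of_conj_eq_inv (hyK _ (e h).2), map_mul,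
          map_inv]
        rfl

theorem sq_sq_eq_one_of_conj_eq_inv {g : G} (hg : g * g ^ 2 * g⁻¹ = (g ^ 2)⁻¹) :
    (g ^ 2) ^ 2 = 1 := by
  rwa [(Commute.self_pow g 2).eq, mul_inv_cancel_right, eq_inv_iff_mul_eq_one, ← sq] at hg

theorem eq_of_sq_eq_one_of_isCyclic {C : Type*} [Group C] [Finite C] [IsCyclic C] {a b : C}
    (ha : a ^ 2 = 1) (ha1 : a ≠ 1) (hb : b ^ 2 = 1) (hb1 : b ≠ 1) : a = b := by
  classical
  have := Fintype.ofFinite C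
  by_contra hab
  have hsub : {1, a, b} ⊆ Finset.univ.filter fun c : C ↦ c ^ 2 = 1 := by
    simp [Finset.insert_subset_iff, ha, hb]
  have hcard : Finset.card {1, a, b} = 3 := by simp [*, eq_comm]
  have := (Finset.card_le_card hsub).trans (IsCyclic.card_pow_eq_one_le two_pos)
  omega

theorem nonempty_mulEquiv_of_isCyclic_of_conj_eq_inv [Finite G'] [IsCyclic H] [IsCyclic K]
    (hcard : Nat.card H = Nat.card K) (hH : H.index = 2) (hK : K.index = 2) (hx : x ∉ H)
    (hy : y ∉ K) (hxH : ∀ h ∈ H, x * h * x⁻¹ = h⁻¹) (hyK : ∀ k ∈ K, y * k * y⁻¹ = k⁻¹)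
    (hxy : x ^ 2 = 1 ↔ y ^ 2 = 1) : Nonempty (G ≃* G') := by
  let e : H ≃* K := mulEquivOfCyclicCardEq hcard
  refine nonempty_mulEquiv_of_index_eq_two_of_conj_eq_inv e hH hK hx hy hxH hyK ?_
  set s : H := ⟨x ^ 2, sq_mem_of_index_two hH x⟩
  set t : K := ⟨y ^ 2, sq_mem_of_index_two hK y⟩
  have hst : s = 1 ↔ t = 1 := by simpa only [s, t, Subgroup.mk_eq_one] using hxy
  have hs : s ^ 2 = 1 := Subtype.ext (sq_sq_eq_one_of_conj_eq_inv (hxH _ s.2))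
  have ht : t ^ 2 = 1 := Subtype.ext (sq_sq_eq_one_of_conj_eq_inv (hyK _ t.2))
  by_cases ht1 : t = 1
  · rw [ht1, hst.2 ht1, map_one]
  · refine eq_of_sq_eq_one_of_isCyclic ?_ ?_ ht ht1
    · rw [← map_pow, hs, map_one]
    · rwa [ne_eq, EmbeddingLike.map_eq_one_iff, hst]

theorem nonempty_mulEquiv_dihedralGroup {n : ℕ} [NeZero n] [IsCyclic H] (hcard : Nat.card H = n)
    (hH : H.index = 2) (hx : x ∉ H) (hxH : ∀ h ∈ H, x * h * x⁻¹ = h⁻¹) (hx2 : x ^ 2 = 1) :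
    Nonempty (G ≃* DihedralGroup n) := by
  have hsq : ∀ g ∉ zpowers (DihedralGroup.r 1 : DihedralGroup n), g ^ 2 = 1 := fun g hg ↦
    orderOf_eq_two_of_notMem_zpowers_r_one g hg ▸ pow_orderOf_eq_one g
  have hsr : DihedralGroup.sr 0 ∉ zpowers (DihedralGroup.r 1 : DihedralGroup n) := by
    rintro ⟨k, hk⟩
    simp at hk
  exact nonempty_mulEquiv_of_isCyclic_of_conj_eq_inv (hcard.trans (card_zpowers_r_one n).symm) hH
    (index_zpowers_r_one n) hx hsr hxH
    (fun k hk ↦ conj_eq_inv_of_forall_notMem_sq_eq_one hsq hsr hk)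
    (iff_of_true hx2 (hsq _ hsr))

theorem nonempty_mulEquiv_quaternionGroup {n : ℕ} [NeZero n] [IsCyclic H]
    (hcard : Nat.card H = 2 * n) (hH : H.index = 2) (hx : x ∉ H)
    (hxH : ∀ h ∈ H, x * h * x⁻¹ = h⁻¹) (hx2 : x ^ 2 ≠ 1) :
    Nonempty (G ≃* QuaternionGroup n) := by
  have hxa : QuaternionGroup.xa 0 ∉ zpowers (QuaternionGroup.a 1 : QuaternionGroup n) := by
    simp [mem_zpowers_a_one_iff]
  have hinv : ∀ k ∈ zpowers (QuaternionGroup.a 1 : QuaternionGroup n),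
      QuaternionGroup.xa 0 * k * (QuaternionGroup.xa 0)⁻¹ = k⁻¹ := by
    intro k hk
    obtain ⟨i, rfl⟩ := mem_zpowers_a_one_iff.1 hk
    rw [mul_inv_eq_iff_eq_mul, eq_inv_mul_iff_mul_eq, QuaternionGroup.xa_mul_a,
      QuaternionGroup.a_mul_xa, zero_add, sub_self]
  refine nonempty_mulEquiv_of_isCyclic_of_conj_eq_inv (hcard.trans (card_zpowers_a_one n).symm) hH
    (index_zpowers_a_one n) hx hxa hxH hinv (iff_of_false hx2 fun h ↦ ?_)
  have := orderOf_dvd_of_pow_eq_one h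
  rw [QuaternionGroup.orderOf_xa] at this
  omega

end Recognition

section SmallOrders

variable {G : Type*} [Group G]

theorem conj_eq_inv_of_mem_zpowers {g u h : G} (hgu : g * u * g⁻¹ = u⁻¹) (hh : h ∈ zpowers u) :
    g * h * g⁻¹ = h⁻¹ := by
  obtain ⟨k, rfl⟩ := hh
  simp only [← conj_zpow, hgu, inv_zpow]

variable [Finite G]

theorem eq_or_eq_inv_of_zpowers_eq_zpowers {a b : G} (ha : φ (orderOf a) = 2)
    (h : zpowers b = zpowers a) : b = a ∨ b = a⁻¹ := by
  have hcard : Nat.card {g : G // zpowers g = zpowers a} = 2 := by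
    rw [card_zpowers_eq, Nat.card_zpowers, ha]
  have hinv : a⁻¹ ≠ a := fun hself ↦ by
    have hdvd : orderOf a ∣ 2 := orderOf_dvd_of_pow_eq_one (by
      rw [sq, mul_eq_one_iff_eq_inv, hself])
    obtain h1 | h2 := (Nat.dvd_prime Nat.prime_two).1 hdvd <;> simp_all
  obtain ⟨_, -, hunique⟩ := (Nat.card_eq_two_iff' ⟨a, rfl⟩).1 hcard
  refine or_iff_not_imp_left.2 fun hba ↦ congrArg Subtype.val <|
    (hunique ⟨b, h⟩ ?_).trans (hunique ⟨a⁻¹, zpowers_inv⟩ ?_).symm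
  · exact fun e ↦ hba (congrArg Subtype.val e)
  · exact fun e ↦ hinv (congrArg Subtype.val e)

theorem conj_eq_or_eq_inv_of_cyclicCount_eq_one {u : G} (hu : φ (orderOf u) = 2)
    (h1 : cyclicCount G (orderOf u) = 1) (g : G) : g * u * g⁻¹ = u ∨ g * u * g⁻¹ = u⁻¹ :=
  eq_or_eq_inv_of_zpowers_eq_zpowers hu
    (zpowers_eq_zpowers_of_cyclicCount_eq_one h1 (orderOf_conj g u) rfl)

theorem nonempty_mulEquiv_of_forall_notMem_zpowers_sq_eq_one {x : G} (hx : x ^ 2 ≠ 1)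
    (hsq : ∀ g ∉ zpowers x, g ^ 2 = 1) :
    Nonempty (G ≃* Multiplicative (ZMod (orderOf x))) ∨
      Nonempty (G ≃* DihedralGroup (orderOf x)) := by
  have : NeZero (orderOf x) := ⟨(orderOf_pos x).ne'⟩
  by_cases htop : zpowers x = ⊤
  · have : IsCyclic G := isCyclic_iff_exists_zpowers_eq_top.2 ⟨x, htop⟩
    rw [orderOf_eq_card_of_zpowers_eq_top htop]
    exact .inl ⟨(zmodCyclicMulEquiv inferInstance).symm⟩
  · obtain ⟨y, hy⟩ : ∃ y, y ∉ zpowers x := by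
      by_contra! h
      exact htop ((eq_top_iff' _).2 h)
    have hinv (g : G) (hg : g ∉ zpowers x) (h : G) (hh : h ∈ zpowers x) : g * h * g⁻¹ = h⁻¹ :=
      conj_eq_inv_of_forall_notMem_sq_eq_one hsq hg hh
    exact .inr (nonempty_mulEquiv_dihedralGroup (Nat.card_zpowers x)
      (index_eq_two_of_forall_notMem_conj_eq_inv htop hinv (mem_zpowers x) hx) hy (hinv y hy)
      (hsq y hy))

end SmallOrders

section TwoGroups

open scoped Pointwise

variable {G : Type*} [Group G]

theorem mul_pow_four_eq_pow_four {x y : G} (hy : y ^ 4 = 1)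
    (hxy : x * y * x⁻¹ = y ∨ x * y * x⁻¹ = y⁻¹) : (x * y) ^ 4 = x ^ 4 := by
  simp only [mul_inv_eq_iff_eq_mul] at hxy
  obtain hcomm | hinv := hxy
  · rw [Commute.mul_pow hcomm, hy, mul_one]
  · have hsq : (x * y) ^ 2 = x ^ 2 := by
      rw [sq, sq, mul_assoc, hinv, mul_inv_cancel_left]
    rw [pow_mul _ 2 2, hsq, ← pow_mul]

theorem zpowers_eq_zpowers_of_cyclicCount_eq_two {d : ℕ} (h : cyclicCount G d = 2) {a b c : G}
    (ha : orderOf a = d) (hb : orderOf b = d) (hc : orderOf c = d) (hba : zpowers b ≠ zpowers a)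
    (hca : zpowers c ≠ zpowers a) : zpowers b = zpowers c := by
  let z (g : G) (hg : orderOf g = d) : {H : Subgroup G // IsCyclic H ∧ Nat.card H = d} :=
    ⟨zpowers g, inferInstance, (Nat.card_zpowers g).trans hg⟩
  have hunique := ((Nat.card_eq_two_iff' (z a ha)).1 h).unique
    (y₁ := z b hb) (y₂ := z c hc) (fun e ↦ hba (congrArg Subtype.val e))
    (fun e ↦ hca (congrArg Subtype.val e))
  exact congrArg Subtype.val hunique

theorem index_zpowers_le_two_of_centralizer_le {y : G} (hy : y ^ 2 ≠ 1)
    (hconj : ∀ g, g * y * g⁻¹ = y ∨ g * y * g⁻¹ = y⁻¹) (hle : centralizer {y} ≤ zpowers y) :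
    (zpowers y).index ≤ 2 := by
  by_cases htop : zpowers y = ⊤
  · rw [htop, index_top]
    exact one_le_two
  refine (index_eq_two_of_forall_notMem_conj_eq_inv htop (fun g hg h hh ↦ ?_)
    (mem_zpowers y) hy).le
  exact conj_eq_inv_of_mem_zpowers ((hconj g).resolve_left fun hgy ↦
    hg (hle (mem_centralizer_singleton_iff.2 (mul_inv_eq_iff_eq_mul.1 hgy)))) hh

-- The `p`-group `G` acts by conjugation on the cyclic subgroups of order `d`.
theorem exists_normal_isCyclic_of_not_dvd_cyclicCount {p d : ℕ} [Fact p.Prime] (hG : IsPGroup p G)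
    (hd : ¬ p ∣ cyclicCount G d) :
    ∃ Y : Subgroup G, Y.Normal ∧ IsCyclic Y ∧ Nat.card Y = d := by
  let X : SubMulAction (ConjAct G) (Subgroup G) :=
    { carrier := {H | IsCyclic H ∧ Nat.card H = d}
      smul_mem' := fun g H ⟨hH, hcard⟩ ↦
        ⟨(equivSMul g H).isCyclic.1 hH, by rw [← hcard, ← Nat.card_congr (equivSMul g H).toEquiv]⟩ }
  obtain ⟨⟨Y, hY, hcard⟩, hfix⟩ :=
    (hG.of_equiv ConjAct.toConjAct).nonempty_fixed_point_of_prime_not_dvd_card X hd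
  refine ⟨Y, ⟨fun h hh g ↦ ?_⟩, hY, hcard⟩
  have hgY : ConjAct.toConjAct g • Y = Y := congrArg Subtype.val (hfix (ConjAct.toConjAct g))
  exact hgY ▸ smul_mem_pointwise_smul h (ConjAct.toConjAct g) Y hh

variable [Finite G]

theorem zpowers_eq_zpowers_of_mem_zpowers {x a b : G} (ha : a ∈ zpowers x) (hb : b ∈ zpowers x)
    (hab : orderOf a = orderOf b) : zpowers a = zpowers b := by
  have h1 : cyclicCount (zpowers x) (orderOf b) = 1 :=
    cyclicCount_of_isCyclic (Nat.card_zpowers x ▸ orderOf_dvd_of_mem_zpowers hb)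
  have := congrArg (Subgroup.map (zpowers x).subtype) <|
    zpowers_eq_zpowers_of_cyclicCount_eq_one h1 (x := ⟨a, ha⟩) (y := ⟨b, hb⟩)
      ((Subgroup.orderOf_mk ..).trans hab) (Subgroup.orderOf_mk ..)
  simpa only [MonoidHom.map_zpowers, subtype_apply] using this

-- If `x` has order `8`, an element `y` of order `4` outside `⟨x⟩` generates the only other cyclic
-- subgroup of order `4`, so `x` normalizes `⟨y⟩` and `x * y` has order `8` too.
theorem cyclicCount_eight_ne_one (h4 : cyclicCount G 4 = 2) : cyclicCount G 8 ≠ 1 := by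
  intro h8
  obtain ⟨x, hx⟩ := cyclicCount_pos_iff.1 (h8 ▸ one_pos)
  have hx2 : orderOf (x ^ 2) = 4 := by rw [orderOf_pow, hx]; decide
  have hx2mem : x ^ 2 ∈ zpowers x := pow_mem (mem_zpowers x) 2
  obtain ⟨y, hy, hyx⟩ : ∃ y, orderOf y = 4 ∧ y ∉ zpowers x := by
    obtain ⟨⟨H, hH, hcard⟩, hne, -⟩ := (Nat.card_eq_two_iff'
      ⟨zpowers (x ^ 2), inferInstance, (Nat.card_zpowers _).trans hx2⟩).1 h4
    obtain ⟨y, rfl⟩ := H.isCyclic_iff_exists_zpowers_eq_top.1 hH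
    have hy : orderOf y = 4 := (Nat.card_zpowers y).symm.trans hcard
    exact ⟨y, hy, fun hyx ↦ hne <| Subtype.ext <|
      zpowers_eq_zpowers_of_mem_zpowers hyx hx2mem (hy.trans hx2.symm)⟩
  have hne {g : G} (hg : g ∉ zpowers x) : zpowers g ≠ zpowers (x ^ 2) := fun h ↦
    hg (zpowers_le.2 hx2mem (h ▸ mem_zpowers g))
  have hconj_notMem : x * y * x⁻¹ ∉ zpowers x := fun h ↦ hyx <| by
    rwa [(zpowers x).mul_mem_cancel_right (inv_mem (mem_zpowers x)),
      (zpowers x).mul_mem_cancel_left (mem_zpowers x)] at h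
  have hconj := eq_or_eq_inv_of_zpowers_eq_zpowers (by rw [hy]; decide) <|
    zpowers_eq_zpowers_of_cyclicCount_eq_two h4 hx2 ((orderOf_conj x y).trans hy) hy
      (hne hconj_notMem) (hne hyx)
  have hpow : (x * y) ^ 4 = x ^ 4 := mul_pow_four_eq_pow_four (hy ▸ pow_orderOf_eq_one y) hconj
  have hxy : orderOf (x * y) = 8 := by
    refine orderOf_eq_prime_pow (p := 2) (n := 2) ?_ ?_
    · rw [show 2 ^ 2 = 4 from rfl, hpow]
      exact pow_ne_one_of_lt_orderOf four_ne_zero (by omega)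
    · rw [pow_succ 2 2, pow_mul, show 2 ^ 2 = 4 from rfl, hpow, ← pow_mul]
      exact orderOf_dvd_iff_pow_eq_one.1 hx.dvd
  have := zpowers_eq_zpowers_of_cyclicCount_eq_one h8 hxy hx ▸ mem_zpowers (x * y)
  exact hyx (((zpowers x).mul_mem_cancel_left (mem_zpowers x)).1 this)

theorem conj_eq_or_eq_inv_of_normal {y : G} [hnormal : (zpowers y).Normal]
    (hy : φ (orderOf y) = 2) (g : G) : g * y * g⁻¹ = y ∨ g * y * g⁻¹ = y⁻¹ :=
  eq_or_eq_inv_of_zpowers_eq_zpowers hy <|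
    zpowers_eq_zpowers_of_mem_zpowers (hnormal.conj_mem y (mem_zpowers y) g) (mem_zpowers y)
      (orderOf_conj g y)

theorem card_sq_mem_zpowers_of_mem_center (hexp : ∀ g : G, g ^ 4 = 1) {y : G}
    (hy : orderOf y = 4) (hcenter : y ∈ center G) :
    Nat.card {g : G | g ^ 2 ∈ zpowers y} = 2 * Nat.card {g : G | g ^ 2 = 1} := by
  have hy2 : y ^ 2 ≠ 1 := pow_ne_one_of_lt_orderOf two_ne_zero (by omega)
  have hy2inv : (y ^ 2)⁻¹ = y ^ 2 := inv_eq_of_mul_eq_one_left (by rw [← pow_add, hexp])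
  have hmul (g : G) : (g * y) ^ 2 = 1 ↔ g ^ 2 = y ^ 2 := by
    rw [Commute.mul_pow (mem_center_iff.1 hcenter g), mul_eq_one_iff_eq_inv, hy2inv]
  have hmem (g : G) : g ^ 2 ∈ zpowers y ↔ g ^ 2 = 1 ∨ g ^ 2 = y ^ 2 := by
    refine ⟨fun hg ↦ or_iff_not_imp_left.2 fun hg1 ↦ ?_, ?_⟩
    · exact congrArg Subtype.val (eq_of_sq_eq_one_of_isCyclic (C := zpowers y) (a := ⟨g ^ 2, hg⟩)
        (b := ⟨y ^ 2, pow_mem (mem_zpowers y) 2⟩) (Subtype.ext (by simp [← pow_mul, hexp]))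
        (by simpa) (Subtype.ext (by simp [← pow_mul, hexp])) (by simpa))
    · rintro (hg | hg) <;> rw [hg]
      exacts [one_mem _, pow_mem (mem_zpowers y) 2]
  have hunion : {g : G | g ^ 2 ∈ zpowers y} =
      {g | g ^ 2 = 1} ∪ Equiv.mulRight y ⁻¹' {g | g ^ 2 = 1} := by
    ext g
    exact (hmem g).trans (or_congr_right (hmul g).symm)
  have hdisj : Disjoint {g : G | g ^ 2 = 1} (Equiv.mulRight y ⁻¹' {g | g ^ 2 = 1}) :=
    Set.disjoint_left.2 fun g hg hgy ↦ hy2 (((hmul g).1 hgy).symm.trans hg)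
  rw [hunion, Nat.card_coe_set_eq, Set.ncard_union_eq hdisj,
    Set.ncard_preimage_of_injective_subset_range (Equiv.injective _)
      ((Equiv.surjective _).range_eq ▸ Set.subset_univ _), two_mul, Nat.card_coe_set_eq]

theorem four_dvd_card_sq_eq_one_of_mem_center (hexp : ∀ g : G, g ^ 4 = 1) {y : G}
    (hy : orderOf y = 4) (hcenter : y ∈ center G) (hcard : 8 ∣ Nat.card G) :
    4 ∣ Nat.card {g : G | g ^ 2 = 1} := by
  have : Fact (Nat.Prime 2) := ⟨Nat.prime_two⟩
  have : (zpowers y).Normal := ⟨fun h hh g ↦ by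
    rwa [mem_center_iff.1 (zpowers_le.2 hcenter hh) g, mul_inv_cancel_right]⟩
  have hY : Nat.card (zpowers y) = 4 := (Nat.card_zpowers y).trans hy
  have hindex : 2 ∣ (zpowers y).index := by
    refine Nat.dvd_of_mul_dvd_mul_left four_pos ?_
    rwa [← hY, card_mul_index, hY]
  have hdvd := mul_card_dvd_card_pow_mem (zpowers y) hindex
  rw [card_sq_mem_zpowers_of_mem_center hexp hy hcenter, hY] at hdvd
  exact Nat.dvd_of_mul_dvd_mul_left two_pos hdvd

theorem four_dvd_card_sq_eq_one (hexp : ∀ g : G, g ^ 4 = 1) {y : G} (hy : orderOf y = 4)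
    (hconj : ∀ g, g * y * g⁻¹ = y ∨ g * y * g⁻¹ = y⁻¹) (hcard : 8 ∣ Nat.card (centralizer {y})) :
    4 ∣ Nat.card {g : G | g ^ 2 = 1} := by
  let C := centralizer {y}
  have hyC : y ∈ C := mem_centralizer_singleton_iff.2 rfl
  have hle : zpowers y ≤ C := zpowers_le.2 hyC
  have hinside : 4 ∣ Nat.card {c : C | c ^ 2 = 1} :=
    four_dvd_card_sq_eq_one_of_mem_center (fun c ↦ Subtype.ext (hexp c)) (y := ⟨y, hyC⟩)
      ((Subgroup.orderOf_mk ..).trans hy)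
      (mem_center_iff.2 fun c ↦ Subtype.ext (mem_centralizer_singleton_iff.1 c.2)) hcard
  have houtside : 4 ∣ Nat.card {g : G | g ∉ C ∧ g ^ 2 = 1} := by
    rw [← hy, ← Nat.card_zpowers]
    refine card_dvd_card_of_mul_mem (zpowers y) fun g ⟨hgC, hg⟩ h hh ↦ ?_
    have hgy : g * y * g⁻¹ = y⁻¹ := (hconj g).resolve_left fun h ↦
      hgC (mem_centralizer_singleton_iff.2 (mul_inv_eq_iff_eq_mul.1 h))
    refine ⟨fun hghC ↦ hgC ((C.mul_mem_cancel_right (hle hh)).1 hghC), ?_⟩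
    have hgh : g * h = h⁻¹ * g := mul_inv_eq_iff_eq_mul.1 (conj_eq_inv_of_mem_zpowers hgy hh)
    rw [sq, mul_assoc, ← mul_assoc h g h, mul_assoc h g h, hgh, mul_inv_cancel_left, ← sq, hg]
  have hunion : {g : G | g ^ 2 = 1} =
      (↑) '' {c : C | c ^ 2 = 1} ∪ {g : G | g ∉ C ∧ g ^ 2 = 1} := by
    ext g
    by_cases hg : g ∈ C <;> simp [hg]
  have hdisj : Disjoint ((↑) '' {c : C | c ^ 2 = 1}) {g : G | g ∉ C ∧ g ^ 2 = 1} := by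
    rw [Set.disjoint_left]
    rintro _ ⟨c, -, rfl⟩ hc
    exact hc.1 c.2
  rw [hunion, Nat.card_coe_set_eq, Set.ncard_union_eq hdisj,
    Set.ncard_image_of_injective _ Subtype.val_injective]
  exact dvd_add hinside houtside

theorem card_sq_eq_one_add_two_mul_cyclicCount_four (hexp : ∀ g : G, g ^ 4 = 1) :
    Nat.card {g : G | g ^ 2 = 1} + 2 * cyclicCount G 4 = Nat.card G := by
  have hcompl : {g : G | orderOf g = 4} = {g : G | g ^ 2 = 1}ᶜ := by
    ext g
    exact ⟨fun (hg : orderOf g = 4) ↦ pow_ne_one_of_lt_orderOf two_ne_zero (by omega),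
      fun h ↦ orderOf_eq_prime_pow (p := 2) (n := 1) (by simpa using h) (hexp g)⟩
  have horder : Nat.card {g : G | orderOf g = 4} = 2 * cyclicCount G 4 := card_orderOf_eq 4
  rw [← horder, hcompl]
  exact Set.ncard_add_ncard_compl _

-- A normal cyclic subgroup `⟨y⟩` of order `4` exists because `5` is odd. Either its centralizer is
-- large and `|G| = #{g | g ^ 2 = 1} + 10` fails modulo `4`, or `|G| ≤ 8`.
theorem cyclicCount_four_ne_five (hexp : ∀ g : G, g ^ 4 = 1) : cyclicCount G 4 ≠ 5 := by
  intro h5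
  have : Fact (Nat.Prime 2) := ⟨Nat.prime_two⟩
  have hG : IsPGroup 2 G := fun g ↦ ⟨2, hexp g⟩
  obtain ⟨Y, hnormal, hcyclic, hcard⟩ :=
    exists_normal_isCyclic_of_not_dvd_cyclicCount hG (d := 4) (by rw [h5]; decide)
  obtain ⟨y, rfl⟩ := Y.isCyclic_iff_exists_zpowers_eq_top.1 hcyclic
  have hy : orderOf y = 4 := (Nat.card_zpowers y).symm.trans hcard
  have hconj := conj_eq_or_eq_inv_of_normal (y := y) (by rw [hy]; decide)
  have hcount := card_sq_eq_one_add_two_mul_cyclicCount_four hexp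
  have hle : zpowers y ≤ centralizer {y} := zpowers_le.2 (mem_centralizer_singleton_iff.2 rfl)
  by_cases h8 : 8 ∣ Nat.card (centralizer {y})
  · have := four_dvd_card_sq_eq_one hexp hy hconj h8
    have := hcard ▸ card_subgroup_dvd_card (zpowers y)
    omega
  · have hC : zpowers y = centralizer {y} := by
      refine eq_of_le_of_card_ge hle ?_
      obtain ⟨n, hn⟩ := IsPGroup.iff_card.1 (hG.to_subgroup (centralizer {y}))
      have hn3 : n < 3 := by
        by_contra! h
        exact h8 (hn ▸ pow_dvd_pow 2 h)
      rw [hn, hcard]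
      exact Nat.pow_le_pow_right two_pos (Nat.le_of_lt_succ hn3)
    have hindex : (zpowers y).index ≤ 2 := index_zpowers_le_two_of_centralizer_le
      (pow_ne_one_of_lt_orderOf two_ne_zero (by omega)) hconj hC.ge
    have hG8 : Nat.card G ≤ 8 := by
      rw [← card_mul_index (zpowers y), hcard]
      exact Nat.mul_le_mul_left 4 hindex
    omega

end TwoGroups

section DeficiencyFive

variable {G : Type*} [Group G] [Finite G]

theorem orderOf_le_eight (hG : Nat.card {H : Subgroup G // IsCyclic H} + 5 = Nat.card G) (g : G) :
    orderOf g ≤ 8 :=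
  le_eight_of_le_card_divisors_add_five (by have := orderOf_add_card_isCyclic_le g; omega)

theorem cyclicCount_eq_zero_of_eight_lt
    (hG : Nat.card {H : Subgroup G // IsCyclic H} + 5 = Nat.card G) {n : ℕ} (hn : 8 < n) :
    cyclicCount G n = 0 :=
  Nat.eq_zero_of_not_pos fun h ↦
    let ⟨g, hg⟩ := cyclicCount_pos_iff.1 h
    hn.not_ge (hg ▸ orderOf_le_eight hG g)

theorem weighted_sum_cyclicCount_eq_five
    (hG : Nat.card {H : Subgroup G // IsCyclic H} + 5 = Nat.card G) :
    cyclicCount G 3 + cyclicCount G 4 + 3 * cyclicCount G 5 + cyclicCount G 6 +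
      5 * cyclicCount G 7 + 3 * cyclicCount G 8 = 5 := by
  have hs (g : G) : orderOf g ∈ Finset.Icc 1 8 :=
    Finset.mem_Icc.2 ⟨orderOf_pos g, orderOf_le_eight hG g⟩
  have hsum := sum_totient_sub_one_mul_cyclicCount hs
  have htotient : φ 3 = 2 ∧ φ 4 = 2 ∧ φ 5 = 4 ∧ φ 6 = 2 ∧ φ 7 = 6 ∧ φ 8 = 4 := by decide
  obtain ⟨h3, h4, h5, h6, h7, h8⟩ := htotient
  simp only [Nat.reduceAdd, Nat.one_le_ofNat, Finset.sum_Icc_succ_top, Finset.Icc_self,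
    Finset.sum_singleton, Nat.totient_one, Nat.totient_two, tsub_self, zero_mul, add_zero,
    zero_add, h3, h4, h5, h6, h7, h8, Nat.add_one_sub_one, one_mul] at hsum
  omega

theorem nonempty_mulEquiv_of_cyclicCount_seven_pos
    (hG : Nat.card {H : Subgroup G // IsCyclic H} + 5 = Nat.card G) (h7 : 0 < cyclicCount G 7) :
    Nonempty (G ≃* Multiplicative (ZMod 7)) ∨ Nonempty (G ≃* DihedralGroup 7) := by
  have hsum := weighted_sum_cyclicCount_eq_five hG
  obtain ⟨x, hx⟩ := cyclicCount_pos_iff.1 h7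
  have hx2 : x ^ 2 ≠ 1 := pow_ne_one_of_lt_orderOf two_ne_zero (by omega)
  have hsq (g : G) (hg : g ∉ zpowers x) : g ^ 2 = 1 := by
    have hpos : 0 < cyclicCount G (orderOf g) := cyclicCount_pos_iff.2 ⟨g, rfl⟩
    have hne7 : orderOf g ≠ 7 := fun hg7 ↦
      hg (zpowers_eq_zpowers_of_cyclicCount_eq_one (by omega) hg7 hx ▸ mem_zpowers g)
    refine orderOf_dvd_iff_pow_eq_one.1 ((Nat.dvd_prime Nat.prime_two).2 ?_)
    have := orderOf_pos g
    have := orderOf_le_eight hG g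
    interval_cases orderOf g <;> omega
  exact hx ▸ nonempty_mulEquiv_of_forall_notMem_zpowers_sq_eq_one hx2 hsq

theorem cyclicCount_five_eq_zero
    (hG : Nat.card {H : Subgroup G // IsCyclic H} + 5 = Nat.card G) : cyclicCount G 5 = 0 := by
  by_contra h5
  have : Fact (Nat.Prime 5) := ⟨Nat.prime_five⟩
  have hdvd {n : ℕ} (hn : Nat.Coprime 5 n) (hn2 : 2 ≤ n) : 5 ∣ φ n * cyclicCount G n :=
    dvd_card_orderOf_of_cyclicCount_mul_eq_zero
      (dvd_card_of_cyclicCount_pos (Nat.pos_of_ne_zero h5)) hn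
      (cyclicCount_eq_zero_of_eight_lt hG (by omega))
  have h3 := hdvd (n := 3) (by decide) (by decide)
  have h4 := hdvd (n := 4) (by decide) (by decide)
  have h6 := hdvd (n := 6) (by decide) (by decide)
  rw [show φ 3 = 2 by decide] at h3
  rw [show φ 4 = 2 by decide] at h4
  rw [show φ 6 = 2 by decide] at h6
  have := weighted_sum_cyclicCount_eq_five hG
  omega

theorem cyclicCount_three_le_one_of_cyclicCount_six_eq_one (h6 : cyclicCount G 6 = 1) :
    cyclicCount G 3 ≤ 1 := by
  obtain ⟨u, hu⟩ := cyclicCount_pos_iff.1 (h6 ▸ one_pos)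
  have hu3 : orderOf (u ^ 3) = 2 := by rw [orderOf_pow, hu]; decide
  have hinv : (u ^ 3)⁻¹ = u ^ 3 := by
    rw [inv_eq_iff_mul_eq_one, ← sq, ← hu3, pow_orderOf_eq_one]
  have hcenter : u ^ 3 ∈ center G := mem_center_iff.2 fun g ↦ by
    rw [← mul_inv_eq_iff_eq_mul, ← conj_pow]
    obtain h | h := conj_eq_or_eq_inv_of_cyclicCount_eq_one (by rw [hu]; decide) (hu ▸ h6) g
    · rw [h]
    · rw [h, inv_pow, hinv]
  have := totient_mul_cyclicCount_le_of_mem_center hcenter (n := 3) (by rw [hu3]; decide)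
  rw [hu3, h6, show φ 3 = 2 by decide, show φ (2 * 3) = 2 by decide] at this
  omega

theorem cyclicCount_eq_of_cyclicCount_three_pos
    (hG : Nat.card {H : Subgroup G // IsCyclic H} + 5 = Nat.card G) (h3 : 0 < cyclicCount G 3) :
    cyclicCount G 4 = 3 ∧ cyclicCount G 6 = 1 := by
  have hdvd := dvd_card_of_cyclicCount_pos h3
  have hmod3 : cyclicCount G 3 ≡ 1 [MOD 3] := cyclicCount_modEq_one hdvd
  have hmod4 : 3 ∣ φ 4 * cyclicCount G 4 := dvd_card_orderOf_of_cyclicCount_mul_eq_zero hdvd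
    (by decide) (cyclicCount_eq_zero_of_eight_lt hG (by decide))
  have hmod8 : 3 ∣ φ 8 * cyclicCount G 8 := dvd_card_orderOf_of_cyclicCount_mul_eq_zero hdvd
    (by decide) (cyclicCount_eq_zero_of_eight_lt hG (by decide))
  rw [show φ 4 = 2 by decide] at hmod4
  rw [show φ 8 = 4 by decide] at hmod8
  have hmod6 (h31 : cyclicCount G 3 = 1) (h6 : 0 < cyclicCount G 6) :
      cyclicCount G 6 ≡ 1 [MOD 2] := cyclicCount_prime_mul_modEq_one (p := 2) (by decide) h31 h6
  have hle : cyclicCount G 6 = 1 → cyclicCount G 3 ≤ 1 :=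
    cyclicCount_three_le_one_of_cyclicCount_six_eq_one
  have hsum := weighted_sum_cyclicCount_eq_five hG
  have h5 := cyclicCount_five_eq_zero hG
  unfold Nat.ModEq at hmod3 hmod6
  have h8 : cyclicCount G 8 = 0 := by omega
  obtain h4 | h4 : cyclicCount G 4 = 0 ∨ cyclicCount G 4 = 3 := by omega
  all_goals omega

theorem conj_eq_inv_of_cyclicCount_three_pos
    (hG : Nat.card {H : Subgroup G // IsCyclic H} + 5 = Nat.card G) (h3 : 0 < cyclicCount G 3)
    {u g : G} (hu : orderOf u = 6) (hg : g ∉ zpowers u) : g * u * g⁻¹ = u⁻¹ := by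
  obtain ⟨h4, h6⟩ := cyclicCount_eq_of_cyclicCount_three_pos hG h3
  have hsum := weighted_sum_cyclicCount_eq_five hG
  refine (conj_eq_or_eq_inv_of_cyclicCount_eq_one (by rw [hu]; decide) (hu ▸ h6) g).resolve_left
    fun hconj ↦ hg ?_
  have hcomm : Commute g (u ^ 2) := Commute.pow_right (mul_inv_eq_iff_eq_mul.1 hconj) 2
  have hu2 : orderOf (u ^ 2) = 3 := by rw [orderOf_pow, hu]; decide
  have hu2mem : u ^ 2 ∈ zpowers u := pow_mem (mem_zpowers u) 2
  have hmem {z : G} (hz : orderOf z = 6) : z ∈ zpowers u :=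
    zpowers_eq_zpowers_of_cyclicCount_eq_one h6 hz hu ▸ mem_zpowers z
  have hmul (hcop : (orderOf g).Coprime 3) : orderOf (g * u ^ 2) = orderOf g * 3 := by
    rw [hcomm.orderOf_mul_eq_mul_orderOf_of_coprime (by rwa [hu2]), hu2]
  have horder : 0 < cyclicCount G (orderOf g) := cyclicCount_pos_iff.2 ⟨g, rfl⟩
  have hpos := orderOf_pos g
  have hle := orderOf_le_eight hG g
  interval_cases hord : orderOf g
  · exact orderOf_eq_one_iff.1 hord ▸ one_mem _
  · exact ((zpowers u).mul_mem_cancel_right hu2mem).1 (hmem (hmul (by decide)))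
  · have := zpowers_eq_zpowers_of_cyclicCount_eq_one (by omega) hord hu2
    exact zpowers_le.2 hu2mem (this ▸ mem_zpowers g)
  · have := orderOf_le_eight hG (g * u ^ 2)
    rw [hmul (by decide)] at this
    omega
  · omega
  · exact hmem hord
  · omega
  · omega

theorem nonempty_mulEquiv_of_cyclicCount_three_pos
    (hG : Nat.card {H : Subgroup G // IsCyclic H} + 5 = Nat.card G) (h3 : 0 < cyclicCount G 3) :
    Nonempty (G ≃* QuaternionGroup 3) := by
  obtain ⟨h4, h6⟩ := cyclicCount_eq_of_cyclicCount_three_pos hG h3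
  obtain ⟨u, hu⟩ := cyclicCount_pos_iff.1 (h6 ▸ one_pos)
  obtain ⟨y, hy⟩ := cyclicCount_pos_iff.1 (h4 ▸ three_pos)
  have hyu : y ∉ zpowers u := fun hmem ↦ by
    have := orderOf_dvd_of_mem_zpowers hmem
    rw [hy, hu] at this
    omega
  have hu2 : u ^ 2 ≠ 1 := pow_ne_one_of_lt_orderOf two_ne_zero (by omega)
  have hy2 : y ^ 2 ≠ 1 := pow_ne_one_of_lt_orderOf two_ne_zero (by omega)
  have hinv (g : G) (hg : g ∉ zpowers u) (h : G) (hh : h ∈ zpowers u) : g * h * g⁻¹ = h⁻¹ :=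
    conj_eq_inv_of_mem_zpowers (conj_eq_inv_of_cyclicCount_three_pos hG h3 hu hg) hh
  exact nonempty_mulEquiv_quaternionGroup (by rw [Nat.card_zpowers, hu])
    (index_eq_two_of_forall_notMem_conj_eq_inv (fun htop ↦ hyu (htop.ge (mem_top y))) hinv
      (mem_zpowers u) hu2) hyu (hinv y hyu) hy2

theorem cyclicCount_three_or_seven_pos
    (hG : Nat.card {H : Subgroup G // IsCyclic H} + 5 = Nat.card G) :
    0 < cyclicCount G 3 ∨ 0 < cyclicCount G 7 := by
  by_contra! h
  obtain ⟨h3, h7⟩ := h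
  have hsum := weighted_sum_cyclicCount_eq_five hG
  have h5 := cyclicCount_five_eq_zero hG
  have h6 : cyclicCount G 6 = 0 := by
    by_contra h6
    have := cyclicCount_pos_of_dvd (d := 3) (by decide) (Nat.pos_of_ne_zero h6)
    omega
  by_cases h8 : cyclicCount G 8 = 0
  · refine cyclicCount_four_ne_five (fun g ↦ ?_) (by omega : cyclicCount G 4 = 5)
    have hpos : 0 < cyclicCount G (orderOf g) := cyclicCount_pos_iff.2 ⟨g, rfl⟩
    have := orderOf_pos g
    have := orderOf_le_eight hG g
    refine orderOf_dvd_iff_pow_eq_one.1 ?_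
    interval_cases orderOf g <;> omega
  · have := cyclicCount_pos_of_dvd (G := G) (d := 4) (n := 8) (by decide) (Nat.pos_of_ne_zero h8)
    exact cyclicCount_eight_ne_one (by omega : cyclicCount G 4 = 2) (by omega)

end DeficiencyFive

/-- `QuaternionGroup 3` is the dicyclic group of order 12, which is the
nontrivial semidirect product `C_3 ⋊ C_4`. -/
theorem stmt_4 (G : Type*) [Group G] [Finite G] :
    Nat.card {H : Subgroup G // IsCyclic H} = Nat.card G - 5 ↔
      (Nonempty (G ≃* Multiplicative (ZMod 7)) ∨
       Nonempty (G ≃* DihedralGroup 7) ∨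
       Nonempty (G ≃* QuaternionGroup 3)) := by
  constructor
  · intro h
    have hpos : 0 < Nat.card {H : Subgroup G // IsCyclic H} :=
      Nat.card_pos_iff.2 ⟨⟨⟨⊥, inferInstance⟩⟩, inferInstance⟩
    have hG : Nat.card {H : Subgroup G // IsCyclic H} + 5 = Nat.card G := by omega
    obtain h3 | h7 := cyclicCount_three_or_seven_pos hG
    · exact .inr (.inr (nonempty_mulEquiv_of_cyclicCount_three_pos hG h3))
    · exact (nonempty_mulEquiv_of_cyclicCount_seven_pos hG h7).imp_right .inl
  · rintro (⟨⟨e⟩⟩ | ⟨⟨e⟩⟩ | ⟨⟨e⟩⟩) <;> rw [card_isCyclic_congr e, Nat.card_congr e.toEquiv]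
    · rw [card_isCyclic_of_isCyclic, Nat.card_congr Multiplicative.toAdd, Nat.card_zmod]
      decide
    · rw [card_isCyclic_dihedralGroup, DihedralGroup.nat_card]
      decide
    · rw [card_isCyclic_quaternionGroup, Nat.card_eq_fintype_card, QuaternionGroup.card]
      decide
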